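/- Let (A_ε)_{ε∈(0,1]} be a moderate net of real n×n matrices (all entries O(ε^{−p}) for some p as ε → 0). Then the following are equivalent: (i) A is invertible as a generalized matrix, i.e. there exists a moderate net (B_ε) of real n×n matrices such that all entries of A_ε B_ε − I and of B_ε A_ε − I are O(ε^m) for every m ∈ ℕ; (ii) det A is strictly nonzero, i.e. there exist m ∈ ℕ and ε₀ > 0 with |det A_ε| ≥ ε^m for all ε < ε₀. -/

import Mathlib

/-!
Both directions rest on the fact that moderate nets of reals form a ring: they are closed under
finite sums and products, so by the Leibniz formula the determinant of a moderate matrix net is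
moderate (`IsModerate.det`).

If `A B - I` is negligible, then `A B → I`, so `det A * det B → 1` by continuity of the
determinant. As `det B` is `O(ε^{-p})`, the determinant of `A` is eventually at least
`ε^p / (2 C)`, hence at least `ε^(p+1)`.

Conversely, if `|det A| ≥ ε^m`, then for small `ε` the matrix `A` is honestly invertible, and
`A⁻¹ = (det A)⁻¹ • adj A` is moderate, because `|(det A)⁻¹| ≤ ε^{-m}` and the entries of the
adjugate are determinants of moderate nets. So `B = A⁻¹` works, with `A B - I` and `B A - I`
eventually zero.
-/

open Topology Filter Set Matrix

/-- A net of real matrices is moderate if each entry is `O(ε^{-p})` for some `p`. -/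
def ModerateMat {n : ℕ} (A : ℝ → Matrix (Fin n) (Fin n) ℝ) : Prop :=
  ∀ i j : Fin n, ∃ p : ℕ, ∃ C > (0:ℝ), ∃ ε₀ > (0:ℝ), ∀ ε : ℝ, 0 < ε → ε < ε₀ →
    |A ε i j| ≤ C / ε ^ p

/-- A net of real numbers is moderate if it is `O(ε^{-p})` for some `p` as `ε → 0⁺`. -/
def IsModerate (f : ℝ → ℝ) : Prop :=
  ∃ p : ℕ, f =O[𝓝[>] 0] fun ε : ℝ => (ε ^ p)⁻¹

lemma eventually_nhdsGT_zero_iff {P : ℝ → Prop} :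
    (∀ᶠ ε in 𝓝[>] (0 : ℝ), P ε) ↔ ∃ ε₀ > (0 : ℝ), ∀ ε : ℝ, 0 < ε → ε < ε₀ → P ε := by
  rw [Filter.Eventually, mem_nhdsGT_iff_exists_Ioo_subset]
  exact ⟨fun ⟨u, hu, h⟩ => ⟨u, hu, fun ε h0 h1 => h ⟨h0, h1⟩⟩,
    fun ⟨u, hu, h⟩ => ⟨u, hu, fun ε hε => h ε hε.1 hε.2⟩⟩

lemma isModerate_iff {f : ℝ → ℝ} :
    IsModerate f ↔ ∃ p : ℕ, ∃ C > (0:ℝ), ∃ ε₀ > (0:ℝ), ∀ ε : ℝ, 0 < ε → ε < ε₀ →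
      |f ε| ≤ C / ε ^ p := by
  unfold IsModerate
  refine exists_congr fun p => ?_
  rw [Asymptotics.isBigO_iff']
  refine exists_congr fun C => and_congr_right fun _ => ?_
  rw [eventually_nhdsGT_zero_iff]
  refine exists_congr fun ε₀ => and_congr_right fun _ => forall_congr' fun ε =>
    forall_congr' fun h0 => forall_congr' fun _ => ?_
  have : (0 : ℝ) < ε ^ p := pow_pos h0 p
  rw [Real.norm_eq_abs, Real.norm_eq_abs, abs_of_pos (inv_pos.2 this), div_eq_mul_inv]

lemma inv_pow_isBigO_inv_pow {p q : ℕ} (h : p ≤ q) :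
    (fun ε : ℝ => (ε ^ p)⁻¹) =O[𝓝[>] 0] fun ε : ℝ => (ε ^ q)⁻¹ := by
  refine Asymptotics.IsBigO.of_bound 1 (eventually_nhdsGT_zero_iff.2 ⟨1, one_pos, ?_⟩)
  intro ε h0 h1
  have hp : (0 : ℝ) < ε ^ p := pow_pos h0 p
  have hq : (0 : ℝ) < ε ^ q := pow_pos h0 q
  rw [one_mul, Real.norm_eq_abs, Real.norm_eq_abs, abs_of_pos (inv_pos.2 hp),
    abs_of_pos (inv_pos.2 hq)]
  exact inv_anti₀ hq (pow_le_pow_of_le_one h0.le h1.le h)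

lemma IsModerate.const (c : ℝ) : IsModerate fun _ => c :=
  ⟨0, by simpa using Asymptotics.isBigO_const_const c (one_ne_zero (α := ℝ)) (𝓝[>] (0 : ℝ))⟩

lemma IsModerate.mul {f g : ℝ → ℝ} (hf : IsModerate f) (hg : IsModerate g) :
    IsModerate fun ε => f ε * g ε := by
  obtain ⟨p, hp⟩ := hf
  obtain ⟨q, hq⟩ := hg
  refine ⟨p + q, (hp.mul hq).congr_right fun ε => ?_⟩
  rw [pow_add, mul_inv]

lemma IsModerate.add {f g : ℝ → ℝ} (hf : IsModerate f) (hg : IsModerate g) :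
    IsModerate fun ε => f ε + g ε := by
  obtain ⟨p, hp⟩ := hf
  obtain ⟨q, hq⟩ := hg
  exact ⟨max p q, (hp.trans (inv_pow_isBigO_inv_pow (le_max_left p q))).add
    (hq.trans (inv_pow_isBigO_inv_pow (le_max_right p q)))⟩

lemma IsModerate.sum {ι : Type*} (s : Finset ι) {f : ι → ℝ → ℝ} (hf : ∀ i, IsModerate (f i)) :
    IsModerate fun ε => ∑ i ∈ s, f i ε := by
  classical
  induction s using Finset.induction_on with
  | empty => simpa using IsModerate.const 0
  | insert a s ha ih => simpa [Finset.sum_insert ha] using (hf a).add ih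

lemma IsModerate.prod {ι : Type*} (s : Finset ι) {f : ι → ℝ → ℝ} (hf : ∀ i, IsModerate (f i)) :
    IsModerate fun ε => ∏ i ∈ s, f i ε := by
  classical
  induction s using Finset.induction_on with
  | empty => simpa using IsModerate.const 1
  | insert a s ha ih => simpa [Finset.prod_insert ha] using (hf a).mul ih

lemma IsModerate.det {n : ℕ} {M : ℝ → Matrix (Fin n) (Fin n) ℝ}
    (hM : ∀ i j, IsModerate fun ε => M ε i j) : IsModerate fun ε => (M ε).det := by
  simp only [Matrix.det_apply']
  exact IsModerate.sum _ fun σ => (IsModerate.const _).mul (IsModerate.prod _ fun i => hM _ _)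

/-- The entries of the adjugate are determinants of `M` with one row replaced by a constant one. -/
lemma IsModerate.adjugate {n : ℕ} {M : ℝ → Matrix (Fin n) (Fin n) ℝ}
    (hM : ∀ i j, IsModerate fun ε => M ε i j) (i j : Fin n) :
    IsModerate fun ε => (M ε).adjugate i j := by
  simp only [Matrix.adjugate_apply]
  refine IsModerate.det fun k l => ?_
  by_cases hk : k = j
  · subst hk
    simpa using IsModerate.const _
  · simpa [Matrix.updateRow_ne hk] using hM k l

/-- a moderate net of real `n×n` matrices is invertible as a generalized
matrix (i.e. admits a moderate net `B` with `A B - I` and `B A - I` negligible) if and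
only if its determinant is strictly nonzero (bounded below by some fixed power `ε^m`
for small `ε`). -/
theorem stmt18 {n : ℕ} (A : ℝ → Matrix (Fin n) (Fin n) ℝ) (hA : ModerateMat A) :
    (∃ B : ℝ → Matrix (Fin n) (Fin n) ℝ, ModerateMat B ∧
      (∀ i j : Fin n, ∀ m : ℕ, ∃ C > (0:ℝ), ∃ ε₀ > (0:ℝ), ∀ ε : ℝ, 0 < ε → ε < ε₀ →
        |(A ε * B ε - 1) i j| ≤ C * ε ^ m) ∧
      (∀ i j : Fin n, ∀ m : ℕ, ∃ C > (0:ℝ), ∃ ε₀ > (0:ℝ), ∀ ε : ℝ, 0 < ε → ε < ε₀ →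
        |(B ε * A ε - 1) i j| ≤ C * ε ^ m)) ↔
    (∃ m : ℕ, ∃ ε₀ > (0:ℝ), ∀ ε : ℝ, 0 < ε → ε < ε₀ → ε ^ m ≤ |(A ε).det|) := by
  have hpos : ∀ᶠ ε in 𝓝[>] (0 : ℝ), 0 < ε := self_mem_nhdsWithin
  constructor
  · rintro ⟨B, hB, hAB, -⟩
    have hid : Tendsto (fun ε : ℝ => ε) (𝓝[>] 0) (𝓝 0) := tendsto_id.mono_left nhdsWithin_le_nhds
    have hlim : Tendsto (fun ε => A ε * B ε) (𝓝[>] 0) (𝓝 1) := by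
      refine tendsto_pi_nhds.2 fun i => tendsto_pi_nhds.2 fun j => ?_
      obtain ⟨C, -, hC⟩ := hAB i j 1
      rw [tendsto_iff_norm_sub_tendsto_zero]
      refine squeeze_zero' (.of_forall fun _ => norm_nonneg _) (eventually_nhdsGT_zero_iff.2 hC) ?_
      simpa using hid.const_mul C
    have hdet : Tendsto (fun ε => (A ε * B ε).det) (𝓝[>] 0) (𝓝 1) := by
      have := ((continuous_id.matrix_det).tendsto (1 : Matrix (Fin n) (Fin n) ℝ)).comp hlim
      simpa [Function.comp_def] using this
    obtain ⟨p, C, hC, hBd⟩ := isModerate_iff.1 (IsModerate.det fun i j => isModerate_iff.2 (hB i j))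
    -- the extra power of `ε` absorbs the constant `2 C`
    refine ⟨p + 1, eventually_nhdsGT_zero_iff.1 ?_⟩
    have hsmall : ∀ᶠ ε in 𝓝[>] (0 : ℝ), ε < 1 / (2 * C) :=
      hid.eventually_lt_const (by positivity)
    filter_upwards [hpos, hsmall, hdet.eventually_const_lt (show (1 / 2 : ℝ) < 1 by norm_num),
      eventually_nhdsGT_zero_iff.2 hBd] with ε h0 h1 h2 h3
    have hp : 0 < ε ^ p := pow_pos h0 p
    rw [Matrix.det_mul] at h2
    have h4 : (1 / 2 : ℝ) ≤ |(A ε).det| * (C / ε ^ p) :=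
      calc (1 / 2 : ℝ) ≤ |(A ε).det * (B ε).det| := h2.le.trans (le_abs_self _)
        _ = |(A ε).det| * |(B ε).det| := abs_mul _ _
        _ ≤ _ := by gcongr
    rw [← mul_div_assoc, le_div_iff₀ hp] at h4
    rw [lt_div_iff₀ (by positivity)] at h1
    have h5 : ε ^ (p + 1) * C ≤ |(A ε).det| * C := by
      rw [pow_succ]
      nlinarith
    exact le_of_mul_le_mul_right h5 hC
  · rintro ⟨m, hm⟩
    have hev := eventually_nhdsGT_zero_iff.2 hm
    have hinv : IsModerate fun ε => ((A ε).det)⁻¹ := by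
      refine ⟨m, Asymptotics.IsBigO.of_bound 1 ?_⟩
      filter_upwards [hev, hpos] with ε h h0
      have hp : 0 < ε ^ m := pow_pos h0 m
      rw [one_mul, norm_inv, norm_inv, Real.norm_eq_abs, Real.norm_eq_abs, abs_of_pos hp]
      exact inv_anti₀ hp h
    have hunit : ∀ᶠ ε in 𝓝[>] (0 : ℝ), IsUnit (A ε).det := by
      filter_upwards [hev, hpos] with ε h h0
      exact isUnit_iff_ne_zero.2 (abs_pos.1 ((pow_pos h0 m).trans_le h))
    refine ⟨fun ε => (A ε)⁻¹, fun i j => isModerate_iff.1 ?_, fun i j k => ?_, fun i j k => ?_⟩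
    · simp only [Matrix.inv_def, Ring.inverse_eq_inv', Matrix.smul_apply, smul_eq_mul]
      exact hinv.mul (IsModerate.adjugate (fun i j => isModerate_iff.2 (hA i j)) i j)
    · refine ⟨1, one_pos, eventually_nhdsGT_zero_iff.1 ?_⟩
      filter_upwards [hunit, hpos] with ε h h0
      rw [Matrix.mul_nonsing_inv _ h, sub_self, Matrix.zero_apply, abs_zero]
      positivity
    · refine ⟨1, one_pos, eventually_nhdsGT_zero_iff.1 ?_⟩
      filter_upwards [hunit, hpos] with ε h h0
      rw [Matrix.nonsing_inv_mul _ h, sub_self, Matrix.zero_apply, abs_zero]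
      positivity
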